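/- Let G be the parallel composition of r paths of lengths k_1,...,k_r, where k_1,...,k_l are odd with l ≥ 2, k_{l+1},...,k_r are even, and r − l ≥ 2, and let X be the projective toric subset parameterized by G. Then reg(G) = (⌊k_1/2⌋ + ... + ⌊k_l/2⌋ + k_{l+1}/2 + ... + k_r/2)(q−2). -/

import Mathlib

open MvPolynomial

/-- A finite multigraph without loops: each edge `e` has two distinct endpoints
`fst e` and `snd e`.  Multiple edges with the same endpoints are allowed. -/
structure Multigraph (V E : Type) : Type where
  fst : E → V
  snd : E → V
  ne : ∀ e, fst e ≠ snd e

namespace Multigraph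

variable {V E : Type}

/-- Vertex `v` is an endpoint of the edge `e`. -/
def Incident (G : Multigraph V E) (v : V) (e : E) : Prop :=
  G.fst e = v ∨ G.snd e = v

instance (G : Multigraph V E) [DecidableEq V] (v : V) : DecidablePred (G.Incident v) :=
  fun e => inferInstanceAs (Decidable (G.fst e = v ∨ G.snd e = v))

/-- The degree of a vertex: the number of edges incident to it. -/
noncomputable def degree (G : Multigraph V E) (v : V) : ℕ :=
  Nat.card {e : E // G.Incident v e}

/-- The graph has no isolated vertices. -/
def NoIsolated (G : Multigraph V E) : Prop :=
  ∀ v : V, ∃ e : E, G.Incident v e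

variable (K : Type) [Field K] [Fintype K]

/-- The point of the affine torus associated with an assignment `x` of nonzero
scalars to the vertices: its coordinate at an edge `e = {v,w}` is `x v * x w`. -/
def point (G : Multigraph V E) (x : V → Kˣ) : E → K :=
  fun e => (x (G.fst e) : K) * (x (G.snd e) : K)

/-- The projective toric subset `X` parameterized by `G`, realized as the set of
`Kˣ`-orbits (i.e. projective points) of the points `G.point K x`, `x : V → Kˣ`. -/
def toricSet (G : Multigraph V E) : Set (Set (E → K)) :=
  Set.range fun x : V → Kˣ => MulAction.orbit Kˣ (G.point K x)

/-- The vanishing ideal `I(X)` of the projective toric subset parameterized by `G`: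
the ideal of all polynomials each of whose homogeneous components vanishes at the
point `G.point K x` for every `x : V → Kˣ`. -/
def vanishingIdeal (G : Multigraph V E) : Ideal (MvPolynomial E K) where
  carrier := {f | ∀ (x : V → Kˣ) (d : ℕ), eval (G.point K x) (homogeneousComponent d f) = 0}
  zero_mem' := by intro x d; simp
  add_mem' := by
    intro a b ha hb x d
    rw [map_add, map_add, ha x d, hb x d, add_zero]
  smul_mem' := by
    intro c f hf x n
    rw [smul_eq_mul, ← sum_homogeneousComponent f, Finset.mul_sum, map_sum, map_sum]
    refine Finset.sum_eq_zero fun d _ => ?_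
    nth_rewrite 1 [← sum_homogeneousComponent c]
    rw [Finset.sum_mul, map_sum, map_sum]
    refine Finset.sum_eq_zero fun e _ => ?_
    have h1 : (homogeneousComponent e c * homogeneousComponent d f).IsHomogeneous (e + d) :=
      (homogeneousComponent_isHomogeneous e c).mul (homogeneousComponent_isHomogeneous d f)
    rw [homogeneousComponent_of_mem ((mem_homogeneousSubmodule _ _).mpr h1)]
    split_ifs
    · rw [map_mul, hf x d, mul_zero]
    · simp

/-- The Hilbert function of `S/I(X)`: the dimension over `K` of the degree-`d`
homogeneous component of the quotient, realized as the image of the space of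
degree-`d` homogeneous polynomials in the quotient. -/
noncomputable def hilbert (G : Multigraph V E) (d : ℕ) : ℕ :=
  Module.finrank K
    ((homogeneousSubmodule E K d).map (Ideal.Quotient.mkₐ K (G.vanishingIdeal K)).toLinearMap)

/-- The regularity `reg G`: the least `d` such that the Hilbert function of `S/I(X)`
at `d` equals the number of points of `X`. -/
noncomputable def reg (G : Multigraph V E) : ℕ :=
  sInf {d : ℕ | G.hilbert K d = (G.toricSet K).ncard}

/-- The graph obtained from `G` by deleting a vertex `v` and all edges incident
to it. -/
def deleteVert (G : Multigraph V E) (v : V) :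
    Multigraph {w : V // w ≠ v} {e : E // ¬ G.Incident v e} where
  fst e := ⟨G.fst e.1, fun h => e.2 (Or.inl h)⟩
  snd e := ⟨G.snd e.1, fun h => e.2 (Or.inr h)⟩
  ne e h := G.ne e.1 (congrArg Subtype.val h)

/-- The graph obtained from `G` by identifying the vertex `v₂` with the vertex `v₁`:
the edges are the same, and every endpoint equal to `v₂` is replaced by `v₁`.
This requires that `{v₁, v₂}` is a non-edge of `G`, so that no loops are created. -/
def identifyVert [DecidableEq V] (G : Multigraph V E) (v₁ v₂ : V) (h12 : v₁ ≠ v₂)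
    (h : ∀ e, ¬ (G.Incident v₁ e ∧ G.Incident v₂ e)) :
    Multigraph {w : V // w ≠ v₂} E where
  fst e := ⟨if G.fst e = v₂ then v₁ else G.fst e, by split_ifs with hh; exacts [h12, hh]⟩
  snd e := ⟨if G.snd e = v₂ then v₁ else G.snd e, by split_ifs with hh; exacts [h12, hh]⟩
  ne := by
    intro e heq
    rw [Subtype.ext_iff] at heq
    simp only at heq
    split_ifs at heq with h1 h2 h2
    · exact G.ne e (h1.trans h2.symm)
    · exact h e ⟨Or.inr heq.symm, Or.inl h1⟩
    · exact h e ⟨Or.inl heq, Or.inr h2⟩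
    · exact G.ne e heq

/-- The subgraph of `G` determined by a set `A` of edges of `G`, together with all
endpoints of those edges (so it has no isolated vertices). -/
def subgraph [DecidableEq V] (G : Multigraph V E) (A : Finset E) :
    Multigraph {v : V // ∃ e ∈ A, G.Incident v e} {e : E // e ∈ A} where
  fst e := ⟨G.fst e.1, e.1, e.2, Or.inl rfl⟩
  snd e := ⟨G.snd e.1, e.1, e.2, Or.inr rfl⟩
  ne e h := G.ne e.1 (congrArg Subtype.val h)

end Multigraph

/-- The vertex of the parallel composition of paths of lengths `k i` lying on the
`i`-th path at distance `j` from the common initial vertex:  `j = 0` gives the common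
initial vertex, `j = k i` the common terminal vertex, and `0 < j < k i` gives the
`j`-th interior vertex of the `i`-th path. -/
def pcVert {ι : Type} (k : ι → ℕ) (i : ι) (j : ℕ) :
    Bool ⊕ ((i : ι) × Fin (k i - 1)) :=
  if h0 : j = 0 then Sum.inl false
  else if h : j < k i then Sum.inr ⟨i, ⟨j - 1, by omega⟩⟩
  else Sum.inl true

/-- The parallel composition of the family of paths `P i` of lengths `k i` (`i : ι`):
the `i`-th path has `k i` edges indexed by `Fin (k i)`, its `j`-th edge joining the
vertices of the `i`-th path at distances `j` and `j + 1` from the common initial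
vertex.  All the initial vertices of the paths are identified to a single vertex and
all the terminal vertices are identified to a single vertex. -/
def parallelComp {ι : Type} (k : ι → ℕ) :
    Multigraph (Bool ⊕ ((i : ι) × Fin (k i - 1))) ((i : ι) × Fin (k i)) where
  fst e := pcVert k e.1 e.2.1
  snd e := pcVert k e.1 (e.2.1 + 1)
  ne := by
    rintro ⟨i, j⟩ h
    have hj := j.2
    simp only [pcVert] at h
    split_ifs at h <;> simp_all <;> omega

/-- The monomial `f i`: the product of the edges of the `i`-th path of the parallel
composition in odd positions (positions `1, 3, 5, ...`, i.e. indices `0, 2, 4, ...`). -/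
noncomputable def oddProd {ι : Type} (K : Type) [Field K] (k : ι → ℕ) (i : ι) :
    MvPolynomial ((i : ι) × Fin (k i)) K :=
  ∏ m : Fin ((k i + 1) / 2), X ⟨i, ⟨2 * m.1, by have := m.2; omega⟩⟩

/-- The monomial `g i`: the product of the edges of the `i`-th path of the parallel
composition in even positions (positions `2, 4, 6, ...`, i.e. indices `1, 3, 5, ...`). -/
noncomputable def evenProd {ι : Type} (K : Type) [Field K] (k : ι → ℕ) (i : ι) :
    MvPolynomial ((i : ι) × Fin (k i)) K :=
  ∏ m : Fin (k i / 2), X ⟨i, ⟨2 * m.1 + 1, by have := m.2; omega⟩⟩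

section Comb

/-- weight of a path -/
def pathWt (n k : ℕ) (a : ℕ → ZMod n) (c : ZMod n) : ℕ :=
  ∑ j ∈ Finset.range k, (a j + (-1) ^ j * c).val

theorem two_mul_sum_val (n : ℕ) [NeZero n] : 2 * ∑ z : ZMod n, z.val = n * (n - 1) := by
  obtain ⟨m, rfl⟩ := Nat.exists_eq_succ_of_ne_zero (NeZero.ne n)
  have h : ∑ z : ZMod (m + 1), z.val = ∑ i ∈ Finset.range (m + 1), i :=
    (Fin.sum_univ_eq_sum_range (fun i => i) (m + 1))
  have := Finset.sum_range_id_mul_two (m + 1)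
  simp only [Nat.succ_eq_add_one]
  rw [h, mul_comm, this]

theorem sum_pathWt (n k : ℕ) [NeZero n] (a : ℕ → ZMod n) :
    2 * ∑ c : ZMod n, pathWt n k a c = k * (n * (n - 1)) := by
  unfold pathWt
  rw [Finset.sum_comm]
  have h : ∀ j ∈ Finset.range k, ∑ c : ZMod n, (a j + (-1) ^ j * c).val = ∑ z : ZMod n, z.val := by
    intro j _
    rcases neg_one_pow_eq_or (ZMod n) j with h | h
    · rw [h]
      simp only [one_mul]
      exact Equiv.sum_comp (Equiv.addLeft (a j)) (fun z => z.val)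
    · rw [h]
      simp only [neg_mul, one_mul, ← sub_eq_add_neg]
      exact Equiv.sum_comp (Equiv.subLeft (a j)) (fun z => z.val)
  rw [Finset.sum_congr rfl h, Finset.sum_const, Finset.card_range, smul_eq_mul,
    ← two_mul_sum_val n]
  ring

theorem pathWt_cast (n k : ℕ) [NeZero n] (a : ℕ → ZMod n) (c : ZMod n) :
    (pathWt n k a c : ZMod n) = ∑ j ∈ Finset.range k, a j + (if Odd k then c else 0) := by
  unfold pathWt
  push_cast
  simp only [ZMod.natCast_val, ZMod.cast_id', id_eq]
  rw [Finset.sum_add_distrib, ← Finset.sum_mul, neg_one_geom_sum]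
  rcases Nat.even_or_odd k with h | h
  · have := Nat.not_odd_iff_even.mpr h
    simp [h, this]
  · have := Nat.not_even_iff_odd.mpr h
    simp [h, this]

theorem exists_pathWt_le (n k : ℕ) [NeZero n] (a : ℕ → ZMod n) :
    ∃ c, pathWt n k a c ≤ k / 2 * (n - 1) := by
  by_contra! hcon
  have hn : 0 < n := Nat.pos_of_ne_zero (NeZero.ne n)
  have hs := sum_pathWt n k a
  rcases Nat.even_or_odd' k with ⟨p, rfl | rfl⟩
  · have h1 : ∑ c : ZMod n, (p * (n - 1) + 1) ≤ ∑ c : ZMod n, pathWt n (2 * p) a c := by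
      apply Finset.sum_le_sum
      intro c _
      have := hcon c
      rw [Nat.mul_div_cancel_left _ (by norm_num)] at this
      exact this
    rw [Finset.sum_const, Finset.card_univ, ZMod.card, smul_eq_mul] at h1
    nlinarith
  · have hp : (2 * p + 1) / 2 = p := by omega
    rw [hp] at hcon
    set m := p * (n - 1) + 1 with hm
    have hb : ∀ c : ZMod n, m + ((∑ j ∈ Finset.range (2 * p + 1), a j) - m + c).val
        ≤ pathWt n (2 * p + 1) a c := by
      intro c
      have h1 : m ≤ pathWt n (2 * p + 1) a c := hcon c
      obtain ⟨t, ht⟩ := Nat.exists_eq_add_of_le h1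
      have h2 := pathWt_cast n (2 * p + 1) a c
      rw [if_pos ⟨p, rfl⟩] at h2
      have h3 : (∑ j ∈ Finset.range (2 * p + 1), a j) - m + c = (t : ZMod n) := by
        rw [ht] at h2
        push_cast at h2
        linear_combination -h2
      rw [h3, ht, ZMod.val_natCast]
      have := Nat.mod_le t n
      omega
    have h1 := Finset.sum_le_sum (fun c (_ : c ∈ (Finset.univ : Finset (ZMod n))) => hb c)
    rw [Finset.sum_add_distrib, Finset.sum_const, Finset.card_univ, ZMod.card, smul_eq_mul] at h1
    have e := Equiv.sum_comp (Equiv.addLeft ((∑ j ∈ Finset.range (2 * p + 1), a j) - (m : ZMod n)))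
        (fun z => z.val)
    simp only [Equiv.coe_addLeft] at e
    rw [e] at h1
    have h2 := two_mul_sum_val n
    rw [hm] at h1
    nlinarith

theorem exists_pair (n k₁ k₂ : ℕ) [NeZero n] (a₁ a₂ : ℕ → ZMod n) (s : ZMod n) :
    ∃ u, 2 * (pathWt n k₁ a₁ u + pathWt n k₂ a₂ (s - u)) ≤ (k₁ + k₂) * (n - 1) := by
  by_contra! hcon
  have hn : 0 < n := Nat.pos_of_ne_zero (NeZero.ne n)
  have h1 := Finset.sum_lt_sum_of_nonempty (Finset.univ_nonempty (α := ZMod n))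
    (fun c _ => hcon c)
  rw [Finset.sum_const, Finset.card_univ, ZMod.card, smul_eq_mul, ← Finset.mul_sum,
    Finset.sum_add_distrib] at h1
  have e := Equiv.sum_comp (Equiv.subLeft s) (fun z => pathWt n k₂ a₂ z)
  simp only [Equiv.subLeft_apply] at e
  rw [e] at h1
  have h2 := sum_pathWt n k₁ a₁
  have h3 := sum_pathWt n k₂ a₂
  nlinarith

theorem exists_shift {ι : Type} [DecidableEq ι] (n : ℕ) [NeZero n] (k : ι → ℕ)
    (a : ι → ℕ → ZMod n) (S : Finset ι) (i₀ i₁ : ι) (h0 : i₀ ∈ S) (h1 : i₁ ∈ S) (hne : i₀ ≠ i₁) :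
    ∃ c : ι → ZMod n, ∑ i ∈ S, c i = 0 ∧
      2 * ∑ i ∈ S, pathWt n (k i) (a i) (c i) ≤
        2 * (∑ i ∈ S, k i / 2 * (n - 1)) + (k i₀ % 2 + k i₁ % 2) * (n - 1) := by
  choose c0 hc0 using fun i => exists_pathWt_le n (k i) (a i)
  set T := (S.erase i₀).erase i₁ with hT
  have h1' : i₁ ∈ S.erase i₀ := Finset.mem_erase.mpr ⟨hne.symm, h1⟩
  obtain ⟨u, hu⟩ := exists_pair n (k i₀) (k i₁) (a i₀) (a i₁) (-∑ i ∈ T, c0 i)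
  set c : ι → ZMod n := fun i => if i = i₀ then u else if i = i₁ then (-∑ i ∈ T, c0 i) - u else c0 i
    with hc
  have e0 : c i₀ = u := by simp [hc]
  have e1 : c i₁ = (-∑ i ∈ T, c0 i) - u := by simp [hc, hne.symm]
  have eT : ∀ i ∈ T, c i = c0 i := by
    intro i hi
    simp only [hT, Finset.mem_erase] at hi
    simp [hc, hi.1, hi.2.1]
  refine ⟨c, ?_, ?_⟩
  · rw [← Finset.add_sum_erase S c h0, ← Finset.add_sum_erase _ c h1', ← hT,
      Finset.sum_congr rfl eT, e0, e1]
    ring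
  · rw [← Finset.add_sum_erase S _ h0, ← Finset.add_sum_erase _ _ h1',
      ← Finset.add_sum_erase S (fun i => k i / 2 * (n - 1)) h0,
      ← Finset.add_sum_erase _ (fun i => k i / 2 * (n - 1)) h1', ← hT, e0, e1]
    have hle : ∑ i ∈ T, pathWt n (k i) (a i) (c i) ≤ ∑ i ∈ T, k i / 2 * (n - 1) := by
      apply Finset.sum_le_sum
      intro i hi
      rw [eT i hi]
      exact hc0 i
    have m0 : k i₀ * (n - 1) = 2 * (k i₀ / 2 * (n - 1)) + k i₀ % 2 * (n - 1) := by
      conv_lhs => rw [← Nat.div_add_mod (k i₀) 2]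
      ring
    have m1 : k i₁ * (n - 1) = 2 * (k i₁ / 2 * (n - 1)) + k i₁ % 2 * (n - 1) := by
      conv_lhs => rw [← Nat.div_add_mod (k i₁) 2]
      ring
    rw [add_mul] at hu ⊢
    omega

end Comb
section Alg

set_option linter.unusedSectionVars false

theorem card_dual_le (A K : Type) [CommGroup A] [Finite A] [Field K] [Fintype K] :
    Nat.card (A →* Kˣ) ≤ Nat.card A := by
  classical
  have := Fintype.ofFinite A
  have : Finite (A →* K) := DFunLike.finite _
  have : Finite (A →* Kˣ) := DFunLike.finite _
  have := Fintype.ofFinite (A →* K)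
  have h1 := (linearIndependent_monoidHom A K).fintype_card_le_finrank
  rw [Module.finrank_fintype_fun_eq_card] at h1
  have h2 : Nat.card (A →* Kˣ) ≤ Nat.card (A →* K) := by
    apply Nat.card_le_card_of_injective (fun f : A →* Kˣ => (Units.coeHom K).comp f)
    intro f g hfg
    ext x
    exact DFunLike.congr_fun hfg x
  rw [Nat.card_eq_fintype_card (α := A →* K)] at h2
  rw [Nat.card_eq_fintype_card (α := A)]
  exact h2.trans h1

namespace Multigraph

variable {V E : Type} [Fintype E] (K : Type) [Field K] [Fintype K]

/-- the character attached to an integer edge vector -/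
def chi (G : Multigraph V E) (a : E → ℤ) : (V → Kˣ) →* Kˣ where
  toFun x := ∏ e, (x (G.fst e) * x (G.snd e)) ^ a e
  map_one' := by simp
  map_mul' x y := by
    rw [← Finset.prod_mul_distrib]
    refine Finset.prod_congr rfl fun e _ => ?_
    rw [← mul_zpow]
    congr 1
    simp only [Pi.mul_apply]
    exact mul_mul_mul_comm _ _ _ _

theorem chi_apply (G : Multigraph V E) (a : E → ℤ) (x : V → Kˣ) :
    G.chi K a x = ∏ e, (x (G.fst e) * x (G.snd e)) ^ a e := rfl

theorem chi_add (G : Multigraph V E) (a b : E → ℤ) :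
    G.chi K (a + b) = G.chi K a * G.chi K b := by
  ext x
  simp only [MonoidHom.mul_apply, chi_apply, Pi.add_apply, zpow_add, Finset.prod_mul_distrib]

theorem chi_zero (G : Multigraph V E) : G.chi K 0 = 1 := by
  ext x
  simp [chi_apply]

theorem chi_neg (G : Multigraph V E) (a : E → ℤ) :
    G.chi K (-a) = (G.chi K a)⁻¹ := by
  ext x
  simp [chi_apply]

/-- characters of integer degree `d` -/
def degSet (G : Multigraph V E) (d : ℤ) : Set ((V → Kˣ) →* Kˣ) :=
  {χ | ∃ a : E → ℤ, ∑ e, a e = d ∧ G.chi K a = χ}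

/-- characters of monomials of degree `d` -/
def monSet (G : Multigraph V E) (d : ℕ) : Set ((V → Kˣ) →* Kˣ) :=
  {χ | ∃ a : E → ℕ, ∑ e, a e = d ∧ G.chi K (fun e => (a e : ℤ)) = χ}

/-- the group of characters of degree zero -/
def zeroGrp (G : Multigraph V E) : Subgroup ((V → Kˣ) →* Kˣ) where
  carrier := G.degSet K 0
  one_mem' := ⟨0, by simp, G.chi_zero K⟩
  mul_mem' := by
    rintro _ _ ⟨a, ha, rfl⟩ ⟨b, hb, rfl⟩
    exact ⟨a + b, by simp [Finset.sum_add_distrib, ha, hb], G.chi_add K a b⟩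
  inv_mem' := by
    rintro _ ⟨a, ha, rfl⟩
    exact ⟨-a, by simp [ha], G.chi_neg K a⟩

/-- evaluation pairing -/
def pairing (G : Multigraph V E) : (V → Kˣ) →* (G.zeroGrp K →* Kˣ) where
  toFun x :=
    { toFun := fun χ => χ.1 x
      map_one' := rfl
      map_mul' := fun _ _ => rfl }
  map_one' := by
    ext χ
    simp
  map_mul' x y := by
    ext χ
    simp

theorem orbit_iff [DecidableEq E] (G : Multigraph V E) (e₀ : E) (x y : V → Kˣ) :
    MulAction.orbit Kˣ (G.point K x) = MulAction.orbit Kˣ (G.point K y) ↔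
      G.pairing K x = G.pairing K y := by
  rw [MulAction.orbit_eq_iff, MulAction.mem_orbit_iff]
  constructor
  · rintro ⟨u, hu⟩
    ext ⟨χ, a, ha, rfl⟩
    have h1 : ∀ e, x (G.fst e) * x (G.snd e) = u * (y (G.fst e) * y (G.snd e)) := by
      intro e
      have := congrFun hu e
      ext
      simp only [point, Pi.smul_apply, Units.smul_def, smul_eq_mul] at this
      push_cast
      exact this.symm
    change ((G.chi K a x : Kˣ) : K) = (G.chi K a y : Kˣ)
    congr 1
    simp only [chi_apply, h1]
    have h2 : ∀ e, (u * (y (G.fst e) * y (G.snd e))) ^ a e =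
        u ^ a e * (y (G.fst e) * y (G.snd e)) ^ a e := fun e => mul_zpow _ _ _
    have h3 : ∀ s : Finset E, ∏ e ∈ s, u ^ a e = u ^ ∑ e ∈ s, a e := by
      intro s
      induction s using Finset.induction_on with
      | empty => simp
      | insert b s hb ih => rw [Finset.prod_insert hb, Finset.sum_insert hb, ih, zpow_add]
    simp only [h2, Finset.prod_mul_distrib, h3, ha, zpow_zero, one_mul]
  · intro h
    refine ⟨(x (G.fst e₀) * x (G.snd e₀)) / (y (G.fst e₀) * y (G.snd e₀)), ?_⟩
    funext e
    have h1 : G.chi K (Pi.single e 1 - Pi.single e₀ 1) x =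
        G.chi K (Pi.single e 1 - Pi.single e₀ 1) y :=
      DFunLike.congr_fun h ⟨_, Pi.single e 1 - Pi.single e₀ 1, by simp, rfl⟩
    have h2 : ∀ (z : V → Kˣ) (e : E), G.chi K (Pi.single e 1) z = z (G.fst e) * z (G.snd e) := by
      intro z e
      rw [chi_apply, Finset.prod_eq_single e]
      · simp
      · intro b _ hb
        simp [hb]
      · simp
    rw [sub_eq_add_neg, chi_add, chi_neg] at h1
    simp only [MonoidHom.mul_apply, MonoidHom.inv_apply, h2, ← div_eq_mul_inv] at h1
    have h3 : (x (G.fst e₀) * x (G.snd e₀)) / (y (G.fst e₀) * y (G.snd e₀)) *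
      (y (G.fst e) * y (G.snd e)) = x (G.fst e) * x (G.snd e) := by
      rw [div_eq_div_iff_mul_eq_mul] at h1
      rw [div_mul_eq_mul_div, div_eq_iff_eq_mul, h1, mul_comm]
    have h4 := congrArg (fun u : Kˣ => (u : K)) h3
    simp only [point, Pi.smul_apply, Units.smul_def, smul_eq_mul]
    push_cast at h4 ⊢
    exact h4

theorem ncard_toricSet [Finite V] [DecidableEq E] (G : Multigraph V E) (e₀ : E) :
    (G.toricSet K).ncard = (G.degSet K 0).ncard := by
  have f1 : Finite ((V → Kˣ) →* Kˣ) := DFunLike.finite _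
  have f2 : Finite (G.zeroGrp K →* Kˣ) := DFunLike.finite _
  have h0 : (G.degSet K 0).ncard = Nat.card (G.zeroGrp K) := rfl
  have h1 : (G.toricSet K).ncard = Nat.card (G.pairing K).range := by
    change (Set.range _).ncard = (Set.range (G.pairing K)).ncard
    rw [← Nat.card_coe_set_eq, ← Nat.card_coe_set_eq]
    refine Nat.card_congr ((Setoid.quotientKerEquivRange _).symm.trans
      ((Quotient.congr (Equiv.refl _) ?_).trans (Setoid.quotientKerEquivRange _)))
    intro x y
    exact G.orbit_iff K e₀ x y
  rw [h0, h1]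
  apply le_antisymm
  · exact (Nat.card_le_card_of_injective (G.pairing K).range.subtype
      Subtype.val_injective).trans (card_dual_le _ K)
  · refine le_trans ?_ (card_dual_le (G.pairing K).range K)
    have f3 : Finite ((G.pairing K).range →* Kˣ) := DFunLike.finite _
    refine Nat.card_le_card_of_injective (fun χ =>
      ({ toFun := fun r => r.1 χ
         map_one' := rfl
         map_mul' := fun _ _ => rfl } : (G.pairing K).range →* Kˣ)) ?_
    intro χ ψ h
    ext x
    have := DFunLike.congr_fun h ⟨G.pairing K x, x, rfl⟩
    exact congrArg (fun u : Kˣ => (u : K)) this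

theorem ncard_degSet [DecidableEq E] (G : Multigraph V E) (e₀ : E) (d : ℤ) :
    (G.degSet K d).ncard = (G.degSet K 0).ncard := by
  have : G.degSet K d = (fun χ => G.chi K (Pi.single e₀ d) * χ) '' G.degSet K 0 := by
    ext χ
    constructor
    · rintro ⟨a, ha, rfl⟩
      refine ⟨_, ⟨a - Pi.single e₀ d, by simp [ha], rfl⟩, ?_⟩
      simp only
      rw [← chi_add, add_sub_cancel]
    · rintro ⟨_, ⟨a, ha, rfl⟩, rfl⟩
      refine ⟨Pi.single e₀ d + a, by simp [Finset.sum_add_distrib, ha], ?_⟩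
      rw [chi_add]
  rw [this, Set.ncard_image_of_injective]
  intro χ ψ h
  ext x
  have h1 := DFunLike.congr_fun h x
  simp only [MonoidHom.mul_apply] at h1
  exact congrArg (fun u : Kˣ => (u : K)) (mul_left_cancel h1)

/-- evaluation of polynomials at the points of the toric set -/
noncomputable def evMap (G : Multigraph V E) : MvPolynomial E K →ₗ[K] ((V → Kˣ) → K) :=
  LinearMap.pi fun x => (MvPolynomial.aeval (G.point K x)).toLinearMap

theorem evMap_apply (G : Multigraph V E) (f : MvPolynomial E K) (x : V → Kˣ) :
    G.evMap K f x = eval (G.point K x) f := by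
  simp [evMap, MvPolynomial.aeval_eq_eval]

theorem evMap_monomial (G : Multigraph V E) (s : E →₀ ℕ) (c : K) :
    G.evMap K (monomial s c) =
      c • fun x => ((G.chi K (fun e => (s e : ℤ)) x : Kˣ) : K) := by
  funext x
  rw [evMap_apply, eval_monomial, Finsupp.prod_fintype _ _ (by simp)]
  simp [chi_apply, point]

theorem finrank_map_eq {M N P : Type*} [AddCommGroup M] [Module K M] [AddCommGroup N] [Module K N]
    [AddCommGroup P] [Module K P] (S : Submodule K M) (f : M →ₗ[K] N) (g : M →ₗ[K] P)
    (h : ∀ m ∈ S, f m = 0 ↔ g m = 0) :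
    Module.finrank K (S.map f) = Module.finrank K (S.map g) := by
  have hk : LinearMap.ker (f.comp S.subtype) = LinearMap.ker (g.comp S.subtype) := by
    ext m
    simpa using h m.1 m.2
  have e1 : S.map f = LinearMap.range (f.comp S.subtype) := by
    rw [LinearMap.range_comp, Submodule.range_subtype]
  have e2 : S.map g = LinearMap.range (g.comp S.subtype) := by
    rw [LinearMap.range_comp, Submodule.range_subtype]
  rw [e1, e2]
  exact ((LinearMap.quotKerEquivRange _).symm.trans ((Submodule.quotEquivOfEq _ _ hk).trans
    (LinearMap.quotKerEquivRange _))).finrank_eq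

theorem hilbert_eq [Finite V] (G : Multigraph V E) (d : ℕ) :
    G.hilbert K d = (G.monSet K d).ncard := by
  classical
  have f1 : Finite ((V → Kˣ) →* Kˣ) := DFunLike.finite _
  unfold hilbert
  rw [finrank_map_eq K _ _ (G.evMap K)]
  · have hspan : (homogeneousSubmodule E K d).map (G.evMap K) =
        Submodule.span K (Set.range fun χ : G.monSet K d =>
          (fun x => ((χ.1 x : Kˣ) : K))) := by
      apply le_antisymm
      · rintro _ ⟨f, hf, rfl⟩
        rw [SetLike.mem_coe, mem_homogeneousSubmodule] at hf
        rw [f.as_sum, map_sum]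
        refine Submodule.sum_mem _ fun s hs => ?_
        rw [evMap_monomial]
        refine Submodule.smul_mem _ _ (Submodule.subset_span ?_)
        refine ⟨⟨_, fun e => s e, ?_, rfl⟩, rfl⟩
        have : s.degree = d := by
          rw [Finsupp.degree_eq_weight_one]
          exact hf (mem_support_iff.mp hs)
        rw [← this, Finsupp.degree_eq_sum]
      · rw [Submodule.span_le]
        rintro _ ⟨⟨_, a, ha, rfl⟩, rfl⟩
        refine ⟨monomial (Finsupp.equivFunOnFinite.symm a) 1, ?_, ?_⟩
        · rw [SetLike.mem_coe, mem_homogeneousSubmodule]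
          apply isHomogeneous_monomial
          rw [Finsupp.degree_eq_sum]
          simpa using ha
        · rw [evMap_monomial, one_smul]
          rfl
    rw [hspan]
    have := Fintype.ofFinite (G.monSet K d)
    rw [finrank_span_eq_card, ← Nat.card_eq_fintype_card, Nat.card_coe_set_eq]
    refine (linearIndependent_monoidHom (V → Kˣ) K).comp
      (fun χ : G.monSet K d => (Units.coeHom K).comp χ.1) ?_
    intro χ ψ h
    refine Subtype.ext (MonoidHom.ext fun x => Units.ext ?_)
    exact DFunLike.congr_fun h x
  · intro f hf
    have hf' := (mem_homogeneousSubmodule _ _).mp hf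
    change Ideal.Quotient.mk _ f = 0 ↔ _
    rw [Ideal.Quotient.eq_zero_iff_mem]
    change (∀ (x : V → Kˣ) (m : ℕ), eval (G.point K x) (homogeneousComponent m f) = 0) ↔ _
    constructor
    · intro h
      funext x
      have := h x d
      rw [homogeneousComponent_of_mem hf, if_pos rfl] at this
      rw [evMap_apply, this]
      rfl
    · intro h x m
      rw [homogeneousComponent_of_mem hf]
      split_ifs
      · rw [← evMap_apply, h]
        rfl
      · simp

theorem hilbert_eq_iff [Finite V] [DecidableEq E] (G : Multigraph V E) (e₀ : E) (d : ℕ) :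
    G.hilbert K d = (G.toricSet K).ncard ↔
      ∀ a : E → ℤ, ∑ e, a e = d → ∃ b : E → ℕ, ∑ e, b e = d ∧
        G.chi K (fun e => (b e : ℤ)) = G.chi K a := by
  have f1 : Finite ((V → Kˣ) →* Kˣ) := DFunLike.finite _
  rw [hilbert_eq, ncard_toricSet K G e₀, ← ncard_degSet K G e₀ d]
  have hsub : G.monSet K d ⊆ G.degSet K d := by
    rintro _ ⟨a, ha, rfl⟩
    exact ⟨_, by rw [← ha]; push_cast; rfl, rfl⟩
  constructor
  · intro h a ha
    have := Set.eq_of_subset_of_ncard_le hsub h.ge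
    have hm : G.chi K a ∈ G.degSet K d := ⟨a, ha, rfl⟩
    rwa [← this] at hm
  · intro h
    congr 1
    refine hsub.antisymm ?_
    rintro _ ⟨a, ha, rfl⟩
    exact h a ha

end Multigraph

end Alg
section Final

set_option linter.unusedSectionVars false

open Multigraph

theorem sum_pc {r : ℕ} {M : Type} [AddCommMonoid M] (k : Fin r → ℕ)
    (f : Fin r → ℕ → M) :
    ∑ e : (i : Fin r) × Fin (k i), f e.1 e.2.1 = ∑ i, ∑ j ∈ Finset.range (k i), f i j := by
  rw [Fintype.sum_sigma]
  refine Finset.sum_congr rfl fun i _ => ?_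
  rw [Finset.sum_range]

theorem chi_congr {V E : Type} [Fintype E] (K : Type) [Field K] [Fintype K] [Fintype Kˣ]
    (G : Multigraph V E) (a b : E → ℤ)
    (h : ∀ e, (a e : ZMod (Fintype.card Kˣ)) = b e) : G.chi K a = G.chi K b := by
  refine MonoidHom.ext fun x => ?_
  rw [chi_apply, chi_apply]
  refine Finset.prod_congr rfl fun e _ => ?_
  obtain ⟨t, ht⟩ := (ZMod.intCast_eq_intCast_iff_dvd_sub _ _ _).mp (h e)
  have : b e = a e + (Fintype.card Kˣ : ℤ) * t := by linarith
  rw [this, zpow_add, zpow_mul, zpow_natCast, pow_card_eq_one, one_zpow, mul_one]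

theorem prod_alt {A : Type} [CommGroup A] (y : ℕ → A) (k : ℕ) :
    ∏ j ∈ Finset.range k, (y j * y (j + 1)) ^ ((-1 : ℤ) ^ j) =
      y 0 * y k ^ (-(-1 : ℤ) ^ k) := by
  induction k with
  | zero => simp
  | succ k ih =>
    rw [Finset.prod_range_succ, ih, mul_zpow, pow_succ]
    simp only [mul_neg, mul_one, neg_neg, zpow_neg]
    group

theorem chi_shift (K : Type) [Field K] [Fintype K] [Fintype Kˣ] {r : ℕ} (k : Fin r → ℕ)
    (hk : ∀ i, 0 < k i) (c : Fin r → ℤ)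
    (h1 : ((∑ i, c i : ℤ) : ZMod (Fintype.card Kˣ)) = 0)
    (h2 : ((∑ i, -(-1) ^ k i * c i : ℤ) : ZMod (Fintype.card Kˣ)) = 0) :
    (parallelComp k).chi K (fun e => (-1) ^ e.2.1 * c e.1) = 1 := by
  refine MonoidHom.ext fun x => ?_
  rw [chi_apply, Fintype.prod_sigma]
  have key : ∀ i, ∏ j : Fin (k i), (x ((parallelComp k).fst ⟨i, j⟩) *
      x ((parallelComp k).snd ⟨i, j⟩)) ^ ((-1 : ℤ) ^ j.1 * c i) =
      x (Sum.inl false) ^ c i * x (Sum.inl true) ^ (-(-1) ^ k i * c i) := by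
    intro i
    have := prod_alt (fun j => x (pcVert k i j)) (k i)
    rw [Finset.prod_range] at this
    have e0 : pcVert k i 0 = Sum.inl false := by simp [pcVert]
    have e1 : pcVert k i (k i) = Sum.inl true := by simp [pcVert, (hk i).ne']
    rw [e0, e1] at this
    simp only [zpow_mul]
    rw [Finset.prod_zpow, ← mul_zpow, ← this]
    rfl
  have h3 : ∀ (u : Kˣ) (f : Fin r → ℤ), ((∑ i, f i : ℤ) : ZMod (Fintype.card Kˣ)) = 0 →
      ∏ i, u ^ f i = 1 := by
    intro u f hf
    have h3 : ∀ s : Finset (Fin r), ∏ e ∈ s, u ^ f e = u ^ ∑ e ∈ s, f e := by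
      intro s
      induction s using Finset.induction_on with
      | empty => simp
      | insert b s hb ih => rw [Finset.prod_insert hb, Finset.sum_insert hb, ih, zpow_add]
    rw [h3]
    obtain ⟨t, ht⟩ := (ZMod.intCast_zmod_eq_zero_iff_dvd _ _).mp hf
    rw [ht, zpow_mul, zpow_natCast, pow_card_eq_one, one_zpow]
  simp only [key]
  rw [Finset.prod_mul_distrib, h3 _ _ h1, h3 _ _ h2]
  simp

theorem rep_top (K : Type) [Field K] [Fintype K] [Fintype Kˣ]
    (r l : ℕ) (hl : 2 ≤ l) (hrl : l + 2 ≤ r)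
    (k : Fin r → ℕ) (hk : ∀ i, 0 < k i)
    (ho : ∀ i : Fin r, i.1 < l → Odd (k i)) (he : ∀ i : Fin r, l ≤ i.1 → Even (k i))
    (e₀ : (i : Fin r) × Fin (k i))
    (D : ℕ) (hD : D = (∑ i, k i / 2) * (Fintype.card Kˣ - 1))
    (a : ((i : Fin r) × Fin (k i)) → ℤ) (ha : ∑ e, a e = D) :
    ∃ b : ((i : Fin r) × Fin (k i)) → ℕ, ∑ e, b e = D ∧
      (parallelComp k).chi K (fun e => (b e : ℤ)) = (parallelComp k).chi K a := by
  set n := Fintype.card Kˣ with hn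
  have hn0 : 0 < n := Fintype.card_pos
  have : NeZero n := ⟨hn0.ne'⟩
  let a' : Fin r → ℕ → ZMod n := fun i j => if h : j < k i then (a ⟨i, ⟨j, h⟩⟩ : ZMod n) else 0
  have ha' : ∀ e : (i : Fin r) × Fin (k i), a' e.1 e.2.1 = (a e : ZMod n) := by
    rintro ⟨i, j⟩
    simp [a']
  set S : Finset (Fin r) := Finset.univ.filter (fun i => i.1 < l) with hS
  have odd_iff : ∀ i : Fin r, Odd (k i) ↔ i.1 < l := by
    intro i
    constructor
    · intro h
      by_contra hc
      exact (Nat.not_odd_iff_even.mpr (he i (by omega))) h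
    · exact ho i
  obtain ⟨c1, hc1, hw1⟩ := exists_shift n k a' S ⟨0, by omega⟩ ⟨1, by omega⟩
    (by simp [hS]; omega) (by simp [hS]; omega) (by simp)
  obtain ⟨c2, hc2, hw2⟩ := exists_shift n k a' Sᶜ ⟨l, by omega⟩ ⟨l + 1, by omega⟩
    (by simp [hS]) (by simp [hS]) (by simp)
  rw [Nat.even_iff.mp (he ⟨l, by omega⟩ le_rfl),
    Nat.even_iff.mp (he ⟨l + 1, by omega⟩ (Nat.le_succ l))] at hw2
  rw [Nat.odd_iff.mp (ho ⟨0, by omega⟩ (by simp; omega)),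
    Nat.odd_iff.mp (ho ⟨1, by omega⟩ (by simp; omega))] at hw1
  set c : Fin r → ZMod n := fun i => if i ∈ S then c1 i else c2 i with hc
  have cS : ∀ i ∈ S, c i = c1 i := fun i hi => by simp [hc, hi]
  have cS' : ∀ i ∈ Sᶜ, c i = c2 i := fun i hi => by
    rw [Finset.mem_compl] at hi
    simp [hc, hi]
  have s1 : ∑ i ∈ S, c i = 0 := by rw [Finset.sum_congr rfl cS, hc1]
  have s2 : ∑ i ∈ Sᶜ, c i = 0 := by rw [Finset.sum_congr rfl cS', hc2]
  set T := ∑ i, pathWt n (k i) (a' i) (c i) with hT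
  have hTle : T ≤ D + (n - 1) := by
    rw [hT, ← Finset.sum_add_sum_compl S, hD, Finset.sum_mul,
      ← Finset.sum_add_sum_compl S (fun i => k i / 2 * (n - 1)),
      Finset.sum_congr rfl (fun i hi => by rw [cS i hi]),
      Finset.sum_congr (s₁ := Sᶜ) rfl (fun i hi => by rw [cS' i hi])]
    omega
  let b0 : ((i : Fin r) × Fin (k i)) → ℕ :=
    fun e => (a' e.1 e.2.1 + (-1) ^ e.2.1 * c e.1).val
  have hb0 : ∑ e, b0 e = T :=
    sum_pc k (fun i j => (a' i j + (-1) ^ j * c i).val)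
  have hTmod : (T : ZMod n) = (D : ZMod n) := by
    rw [hT]
    push_cast
    simp only [pathWt_cast]
    rw [Finset.sum_add_distrib, ← sum_pc k a', Finset.sum_congr rfl (fun e _ => ha' e)]
    have : ∑ i, (if Odd (k i) then c i else 0) = 0 := by
      rw [← Finset.sum_filter]
      simp only [odd_iff]
      exact s1
    rw [this, add_zero]
    exact_mod_cast congrArg (fun z : ℤ => (z : ZMod n)) ha
  have hmod : T ≡ D [MOD n] := (ZMod.natCast_eq_natCast_iff _ _ _).mp hTmod
  have hTD : T ≤ D := by
    by_contra! hlt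
    have := (Nat.modEq_iff_dvd' hlt.le).mp hmod.symm
    have := Nat.le_of_dvd (by omega) this
    omega
  obtain ⟨t, ht⟩ := (Nat.modEq_iff_dvd' hTD).mp hmod
  refine ⟨b0 + Pi.single e₀ (n * t), ?_, ?_⟩
  · simp only [Pi.add_apply, Finset.sum_add_distrib, hb0]
    rw [Finset.sum_pi_single']
    simp
    omega
  · have h1 : (parallelComp k).chi K (fun e => (-1) ^ e.2.1 * ((c e.1).val : ℤ)) = 1 := by
      refine chi_shift K k hk (fun i => ((c i).val : ℤ)) ?_ ?_
      · push_cast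
        simp only [ZMod.natCast_val, ZMod.cast_id', id_eq]
        rw [← Finset.sum_add_sum_compl S, s1, s2, add_zero]
      · push_cast
        simp only [ZMod.natCast_val, ZMod.cast_id', id_eq]
        rw [← Finset.sum_add_sum_compl S]
        have o1 : ∀ i ∈ S, -(-1) ^ k i * c i = c i := by
          intro i hi
          have : Odd (k i) := ho i (by simpa [hS] using hi)
          rw [this.neg_one_pow]
          ring
        have o2 : ∀ i ∈ Sᶜ, -(-1) ^ k i * c i = - c i := by
          intro i hi
          have : Even (k i) := he i (by simpa [hS] using hi)
          rw [this.neg_one_pow]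
          ring
        rw [Finset.sum_congr rfl o1, Finset.sum_congr rfl o2, Finset.sum_neg_distrib, s1, s2]
        simp
    have h2 : (parallelComp k).chi K (a + fun e => (-1) ^ e.2.1 * ((c e.1).val : ℤ)) =
        (parallelComp k).chi K a := by
      rw [chi_add, h1]
      exact MonoidHom.ext fun x => by simp
    rw [← h2]
    apply chi_congr
    intro e
    have hs : ((Pi.single e₀ (n * t) : ((i : Fin r) × Fin (k i)) → ℕ) e : ZMod n) = 0 := by
      by_cases h : e = e₀
      · subst h
        simp
      · simp [h]
    simp only [Pi.add_apply]
    push_cast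
    rw [hs]
    simp [b0, ha']

theorem sum_pairs_le (f : ℕ → ℕ) (k : ℕ) :
    ∑ m ∈ Finset.range (k / 2), (f (2 * m) + f (2 * m + 1)) ≤ ∑ j ∈ Finset.range k, f j := by
  have h : ∀ p, ∑ m ∈ Finset.range p, (f (2 * m) + f (2 * m + 1)) =
      ∑ j ∈ Finset.range (2 * p), f j := by
    intro p
    induction p with
    | zero => simp
    | succ p ih =>
      rw [Finset.sum_range_succ, ih, show 2 * (p + 1) = 2 * p + 1 + 1 by ring,
        Finset.sum_range_succ, Finset.sum_range_succ]
      ring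
  rw [h]
  apply Finset.sum_le_sum_of_subset
  intro j
  simp only [Finset.mem_range]
  omega

theorem sum_odd_const (z : ℤ) (k : ℕ) :
    ∑ j ∈ Finset.range k, (if Odd j then z else 0) = ((k / 2 : ℕ) : ℤ) * z := by
  induction k with
  | zero => simp
  | succ k ih =>
    rw [Finset.sum_range_succ, ih]
    rcases Nat.even_or_odd' k with ⟨p, rfl | rfl⟩
    · have h1 : ¬ Odd (2 * p) := by simp
      have h2 : (2 * p + 1) / 2 = 2 * p / 2 := by omega
      rw [if_neg h1, h2, add_zero]
    · have h1 : Odd (2 * p + 1) := ⟨p, rfl⟩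
      have h2 : (2 * p + 1 + 1) / 2 = (2 * p + 1) / 2 + 1 := by omega
      rw [if_pos h1, h2]
      push_cast
      ring

theorem pcVert_eq {r : ℕ} (k : Fin r → ℕ) (i i' : Fin r) (j j' : ℕ) (h0 : 0 < j) (h1 : j < k i)
    (h : pcVert k i' j' = pcVert k i j) : i' = i ∧ j' = j := by
  unfold pcVert at h
  rw [dif_neg h0.ne', dif_pos h1] at h
  split_ifs at h with h2 h3
  simp only [Sum.inr.injEq, Sigma.mk.injEq] at h
  obtain ⟨rfl, h⟩ := h
  simp only [heq_eq_eq, Fin.mk.injEq] at h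
  omega

theorem chi_vertex (K : Type) [Field K] [Fintype K] {r : ℕ} (k : Fin r → ℕ)
    (a : ((i : Fin r) × Fin (k i)) → ℤ) (i : Fin r) (j : ℕ) (hj : j + 1 < k i) (g : Kˣ) :
    (parallelComp k).chi K a (Pi.mulSingle (pcVert k i (j + 1)) g) =
      g ^ (a ⟨i, ⟨j, by omega⟩⟩ + a ⟨i, ⟨j + 1, hj⟩⟩) := by
  have hne : ∀ (i' : Fin r) (j' : ℕ), ¬ (i' = i ∧ j' = j + 1) →
      (Pi.mulSingle (pcVert k i (j + 1)) g : _ → Kˣ) (pcVert k i' j') = 1 := by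
    intro i' j' h
    apply Pi.mulSingle_eq_of_ne
    intro hh
    exact h (pcVert_eq k i i' (j + 1) j' (by omega) hj hh)
  rw [chi_apply, Finset.prod_eq_mul (⟨i, ⟨j, by omega⟩⟩ : (i : Fin r) × Fin (k i))
    ⟨i, ⟨j + 1, hj⟩⟩ (by simp), zpow_add]
  · simp only [parallelComp]
    rw [hne i j (by omega), hne i (j + 1 + 1) (by omega)]
    simp
  · rintro ⟨i', j'⟩ _ ⟨h1, h2⟩
    simp only [parallelComp]
    rw [hne, hne]
    · simp
    · rintro ⟨rfl, h⟩
      apply h1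
      congr 1
      exact Fin.ext (by simpa using h)
    · rintro ⟨rfl, h⟩
      apply h2
      congr 1
      exact Fin.ext (by simpa using h)
  · simp
  · simp

theorem not_rep (K : Type) [Field K] [Fintype K] [Fintype Kˣ]
    (r l : ℕ) (hl : 2 ≤ l) (hrl : l + 2 ≤ r)
    (k : Fin r → ℕ) (hk : ∀ i, 0 < k i)
    (ho : ∀ i : Fin r, i.1 < l → Odd (k i)) :
    ∃ a : ((i : Fin r) × Fin (k i)) → ℤ,
      ∑ e, a e = (((∑ i, k i / 2) * (Fintype.card Kˣ - 1) : ℕ) : ℤ) - 1 ∧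
      ∀ b : ((i : Fin r) × Fin (k i)) → ℕ,
        (parallelComp k).chi K (fun e => (b e : ℤ)) = (parallelComp k).chi K a →
        (∑ i, k i / 2) * (Fintype.card Kˣ - 1) ≤ ∑ e, b e := by
  set n := Fintype.card Kˣ with hn
  have hn0 : 0 < n := Fintype.card_pos
  let i0 : Fin r := ⟨0, by omega⟩
  let e1 : (i : Fin r) × Fin (k i) := ⟨i0, ⟨k i0 - 1, by have := hk i0; omega⟩⟩
  have hodd : Odd (k i0) := ho i0 (by simp [i0]; omega)
  refine ⟨(fun e => if Odd e.2.1 then ((n - 1 : ℕ) : ℤ) else 0) - Pi.single e1 1, ?_, ?_⟩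
  · simp only [Pi.sub_apply, Finset.sum_sub_distrib]
    rw [sum_pc k (fun _ j => if Odd j then ((n - 1 : ℕ) : ℤ) else 0)]
    simp only [sum_odd_const]
    rw [← Finset.sum_mul]
    push_cast
    simp
  · intro b hb
    obtain ⟨g, hg⟩ := IsCyclic.exists_generator (α := Kˣ)
    have hord : orderOf g = n := by
      rw [orderOf_eq_card_of_forall_mem_zpowers hg, Nat.card_eq_fintype_card]
    let f : Fin r → ℕ → ℕ := fun i j => if h : j < k i then b ⟨i, ⟨j, h⟩⟩ else 0
    have hf : ∑ e, b e = ∑ i, ∑ j ∈ Finset.range (k i), f i j := by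
      rw [← sum_pc k f]
      refine Finset.sum_congr rfl ?_
      rintro ⟨i, j⟩ _
      simp [f]
    rw [hf, Finset.sum_mul]
    apply Finset.sum_le_sum
    intro i _
    refine le_trans ?_ (sum_pairs_le (f i) (k i))
    rw [← smul_eq_mul, ← Finset.card_range (k i / 2), ← Finset.sum_const, Finset.card_range]
    apply Finset.sum_le_sum
    intro m hm
    rw [Finset.mem_range] at hm
    have hm1 : 2 * m + 1 < k i := by omega
    have h1 := DFunLike.congr_fun hb (Pi.mulSingle (pcVert k i (2 * m + 1)) g)
    rw [chi_vertex K k _ i (2 * m) hm1, chi_vertex K k _ i (2 * m) hm1] at h1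
    have p1 : (⟨i, ⟨2 * m, by omega⟩⟩ : (i : Fin r) × Fin (k i)) ≠ e1 := by
      intro h
      simp only [e1, Sigma.mk.injEq] at h
      obtain ⟨rfl, h⟩ := h
      simp only [heq_eq_eq, Fin.mk.injEq] at h
      omega
    have p2 : (⟨i, ⟨2 * m + 1, hm1⟩⟩ : (i : Fin r) × Fin (k i)) ≠ e1 := by
      intro h
      simp only [e1, Sigma.mk.injEq] at h
      obtain ⟨rfl, h⟩ := h
      simp only [heq_eq_eq, Fin.mk.injEq] at h
      obtain ⟨s, hs⟩ := hodd
      omega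
    have q1 : ¬ Odd (2 * m) := by simp
    have q2 : Odd (2 * m + 1) := ⟨m, rfl⟩
    simp only [Pi.sub_apply, Pi.single_eq_of_ne p1, Pi.single_eq_of_ne p2, if_neg q1, if_pos q2]
      at h1
    rw [zpow_eq_zpow_iff_modEq, hord] at h1
    have hd := h1.dvd
    have f1 : f i (2 * m) = b ⟨i, ⟨2 * m, by omega⟩⟩ := by simp [f, show 2 * m < k i by omega]
    have f2 : f i (2 * m + 1) = b ⟨i, ⟨2 * m + 1, hm1⟩⟩ := by simp [f, hm1]
    rw [f1, f2]
    by_contra! hlt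
    have := Int.le_of_dvd (by omega) hd
    omega

end Final

/-- **Table 2, case `l > 1, r > l + 1`.**  Let `G` be the parallel composition of `r`
paths, the first `l ≥ 2` of odd lengths and the remaining `r - l ≥ 2` of even lengths.
Then `reg G = (⌊k 0/2⌋ + ... + ⌊k (l-1)/2⌋ + k l/2 + ... + k (r-1)/2)(q-2)`,
where `q = |K|`. -/
theorem reg_parallelComp_many_odd_many_even
    (K : Type) [Field K] [Fintype K] (r l : ℕ) (hl : 2 ≤ l) (hrl : l + 2 ≤ r)
    (k : Fin r → ℕ) (hk : ∀ i, 0 < k i)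
    (ho : ∀ i : Fin r, i.1 < l → Odd (k i)) (he : ∀ i : Fin r, l ≤ i.1 → Even (k i)) :
    (parallelComp k).reg K = (∑ i, k i / 2) * (Fintype.card K - 2) := by
  classical
  have hcard : Fintype.card Kˣ = Fintype.card K - 1 := Fintype.card_units K
  have hc2 : Fintype.card K - 2 = Fintype.card Kˣ - 1 := by omega
  have h0 : 0 < k ⟨0, by omega⟩ := hk _
  let e₀ : (i : Fin r) × Fin (k i) := ⟨⟨0, by omega⟩, ⟨0, h0⟩⟩
  rw [hc2]
  have htop : (parallelComp k).hilbert K ((∑ i, k i / 2) * (Fintype.card Kˣ - 1)) =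
      ((parallelComp k).toricSet K).ncard := by
    rw [Multigraph.hilbert_eq_iff K _ e₀]
    intro a ha
    exact rep_top K r l hl hrl k hk ho he e₀ _ rfl a ha
  unfold Multigraph.reg
  apply le_antisymm
  · exact Nat.sInf_le htop
  · refine le_csInf ⟨_, htop⟩ ?_
    intro d hd
    rw [Set.mem_ofPred_eq, Multigraph.hilbert_eq_iff K _ e₀] at hd
    by_contra! hlt
    obtain ⟨a, ha, hb⟩ := not_rep K r l hl hrl k hk ho
    set D := (∑ i, k i / 2) * (Fintype.card Kˣ - 1) with hD
    obtain ⟨b, hbd, hbc⟩ := hd (a - Pi.single e₀ (((D - 1 - d : ℕ) : ℤ))) (by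
      simp only [Pi.sub_apply, Finset.sum_sub_distrib, ha]
      simp
      omega)
    have h1 := hb (b + Pi.single e₀ (D - 1 - d)) (by
      have e1 : (fun e => (((b + Pi.single e₀ (D - 1 - d) : ((i : Fin r) × Fin (k i)) → ℕ) e : ℕ) : ℤ)) =
          (fun e => (b e : ℤ)) + Pi.single e₀ (((D - 1 - d : ℕ) : ℤ)) := by
        funext e
        by_cases h : e = e₀
        · subst h
          simp
        · simp [h]
      rw [e1, Multigraph.chi_add, hbc, ← Multigraph.chi_add, sub_add_cancel])
    simp only [Pi.add_apply, Finset.sum_add_distrib, hbd] at h1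
    simp at h1
    omega
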